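/- Let f : ℝⁿ → ℝ be a differentiable convex function with f(0) = 0 and f(x) ≥ 0 for all x, and let g : ℝⁿ → ℝ be a differentiable convex function. Let τ : [0,∞) → [0,∞) be a continuously differentiable function with τ(0) = 0, τ'(t) > 0 for all t, and τ(t) → ∞ as t → ∞. Suppose Z : [0,∞) → ℝⁿ is differentiable and the curve t ↦ ∇g(Z(t)) is differentiable with derivative (d/dt)∇g(Z(t)) = −τ'(t)·∇f(Z(t)) for every t ≥ 0. Then for all t ≥ 0, (τ(t) + 1)·f(Z(t)) ≤ D_g(0, Z(0)) + f(Z(0)); in particular f(Z(t)) = O(1/τ(t)). -/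

import Mathlib

/-!
For a reference point `x`, the energy `τ (f(Z) - f(x)) + D_g(x, Z)` has derivative
`τ ⟪∇f(Z), Z'⟫ - τ' D_f(x, Z)` along the flow. The second term is nonpositive because `f` is convex.
For the first, monotonicity of `∇g` passes to the limit in difference quotients and gives
`0 ≤ ⟪(∇g(Z))', Z'⟫ = -τ' ⟪∇f(Z), Z'⟫`, with no second derivative of `g` involved. So the energy
decreases, and its Bregman term is nonnegative. The summand `1` in `τ + 1` is absorbed in `τ`, since
only the derivative of `τ` enters the flow.
-/

open Set RealInnerProductSpace

/-- Bregman divergence `D_g(y, x) = g(y) − g(x) − ⟨∇g(x), y − x⟩`, where `g'`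
is the gradient map of `g`. -/
noncomputable def breg {n : ℕ} (g : EuclideanSpace ℝ (Fin n) → ℝ)
    (g' : EuclideanSpace ℝ (Fin n) → EuclideanSpace ℝ (Fin n))
    (y x : EuclideanSpace ℝ (Fin n)) : ℝ :=
  g y - g x - ⟪g' x, y - x⟫

section QuasiGradientFlow

variable {E : Type*} [NormedAddCommGroup E] [InnerProductSpace ℝ E]

/-- Bregman divergence `f(y) - f(x) - ⟪f'(x), y - x⟫` in a real inner product space, extending
`breg`. The map `f'` stands for a gradient of `f`; only its value at `x` matters. -/
noncomputable def bregmanDiv (f : E → ℝ) (f' : E → E) (y x : E) : ℝ :=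
  f y - f x - ⟪f' x, y - x⟫

lemma bregmanDiv_add_bregmanDiv_swap (f : E → ℝ) (f' : E → E) (x y : E) :
    bregmanDiv f f' y x + bregmanDiv f f' x y = ⟪f' y - f' x, y - x⟫ := by
  simp only [bregmanDiv, inner_sub_left, inner_sub_right]
  ring

/-- Lyapunov function of the quasi-gradient flow relative to a reference point `x`. -/
noncomputable def qgfEnergy (f g : E → ℝ) (g' : E → E) (τ : ℝ → ℝ) (Z : ℝ → E) (x : E)
    (t : ℝ) : ℝ :=
  τ t * (f (Z t) - f x) + bregmanDiv g g' x (Z t)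

lemma inner_nonneg_of_hasDerivWithinAt {u v : ℝ → E} {u' v' : E} {I : Set ℝ} {t : ℝ}
    (hI : UniqueDiffWithinAt ℝ I t)
    (hu : HasDerivWithinAt u u' I t) (hv : HasDerivWithinAt v v' I t)
    (huv : ∀ r ∈ I, 0 ≤ ⟪u r - u t, v r - v t⟫) :
    0 ≤ ⟪u', v'⟫ := by
  have : (nhdsWithin t (I \ {t})).NeBot :=
    accPt_principal_iff_nhdsWithin.1 (uniqueDiffWithinAt_iff_accPt.1 hI)
  have hslope := (hasDerivWithinAt_iff_tendsto_slope.1 hu).inner (𝕜 := ℝ)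
    (hasDerivWithinAt_iff_tendsto_slope.1 hv)
  refine ge_of_tendsto hslope (eventually_nhdsWithin_of_forall fun r hr => ?_)
  simp only [slope, vsub_eq_sub, real_inner_smul_left, real_inner_smul_right, ← mul_assoc]
  exact mul_nonneg (mul_self_nonneg _) (huv r hr.1)

variable [CompleteSpace E] {f g : E → ℝ} {f' g' : E → E} {s : Set E} {x y : E}
  {τ τ' : ℝ → ℝ} {Z : ℝ → E} {I : Set ℝ} {t : ℝ}

lemma hasDerivWithinAt_comp_of_hasGradientWithinAt {v Z' : E}
    (hf : HasGradientWithinAt f v s (Z t)) (hZ : HasDerivWithinAt Z Z' I t) (hZs : MapsTo Z I s) :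
    HasDerivWithinAt (fun r => f (Z r)) ⟪v, Z'⟫ I t :=
  hf.hasFDerivWithinAt.comp_hasDerivWithinAt t hZ hZs

lemma bregmanDiv_nonneg (hf : ConvexOn ℝ s f) (hf' : HasGradientWithinAt f (f' x) s x)
    (hx : x ∈ s) (hy : y ∈ s) : 0 ≤ bregmanDiv f f' y x := by
  let γ : ℝ →ᵃ[ℝ] E := AffineMap.lineMap x y
  have hγs : MapsTo γ (Icc 0 1) s := hf.1.mapsTo_lineMap hx hy
  have hconv : ConvexOn ℝ (Icc 0 1) (f ∘ γ) :=
    (hf.comp_affineMap γ).subset hγs (convex_Icc 0 1)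
  have hderiv : HasDerivWithinAt (f ∘ γ) ⟪f' x, y - x⟫ (Icc 0 1) 0 :=
    hasDerivWithinAt_comp_of_hasGradientWithinAt (by simpa [γ] using hf')
      AffineMap.hasDerivWithinAt_lineMap hγs
  have hslope : ⟪f' x, y - x⟫ ≤ slope (f ∘ γ) 0 1 :=
    hconv.le_slope_of_hasDerivWithinAt (by simp) (by simp) zero_lt_one hderiv
  simpa [slope_def_field, γ, bregmanDiv] using hslope

lemma inner_gradient_sub_nonneg (hf : ConvexOn ℝ s f) (hx : x ∈ s) (hy : y ∈ s)
    (hfx : HasGradientWithinAt f (f' x) s x) (hfy : HasGradientWithinAt f (f' y) s y) :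
    0 ≤ ⟪f' y - f' x, y - x⟫ := by
  rw [← bregmanDiv_add_bregmanDiv_swap f]
  exact add_nonneg (bregmanDiv_nonneg hf hfx hx hy) (bregmanDiv_nonneg hf hfy hy hx)

lemma hasDerivWithinAt_bregmanDiv {Z' p : E} (hg : HasGradientWithinAt g (g' (Z t)) s (Z t))
    (hZ : HasDerivWithinAt Z Z' I t) (hZs : MapsTo Z I s)
    (hp : HasDerivWithinAt (fun r => g' (Z r)) p I t) (x : E) :
    HasDerivWithinAt (fun r => bregmanDiv g g' x (Z r)) (-⟪p, x - Z t⟫) I t := by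
  have hgZ := hasDerivWithinAt_comp_of_hasGradientWithinAt hg hZ hZs
  refine ((hgZ.const_sub (g x)).sub (hp.inner ℝ (hZ.const_sub x))).congr_deriv ?_
  rw [inner_neg_right]
  ring

lemma inner_deriv_gradient_nonneg {Z' p : E} (hI : UniqueDiffWithinAt ℝ I t) (ht : t ∈ I)
    (hg : ConvexOn ℝ s g) (hZs : MapsTo Z I s)
    (hg' : ∀ r ∈ I, HasGradientWithinAt g (g' (Z r)) s (Z r))
    (hZ : HasDerivWithinAt Z Z' I t) (hp : HasDerivWithinAt (fun r => g' (Z r)) p I t) :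
    0 ≤ ⟪p, Z'⟫ :=
  inner_nonneg_of_hasDerivWithinAt hI hp hZ fun r hr =>
    inner_gradient_sub_nonneg hg (hZs ht) (hZs hr) (hg' t ht) (hg' r hr)

lemma hasDerivWithinAt_qgfEnergy {Z' : E} (hZs : MapsTo Z I s)
    (hf' : HasGradientWithinAt f (f' (Z t)) s (Z t))
    (hg' : HasGradientWithinAt g (g' (Z t)) s (Z t))
    (hτ : HasDerivWithinAt τ (τ' t) I t) (hZ : HasDerivWithinAt Z Z' I t)
    (hflow : HasDerivWithinAt (fun r => g' (Z r)) (-(τ' t) • f' (Z t)) I t) (x : E) :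
    HasDerivWithinAt (qgfEnergy f g g' τ Z x)
      (τ t * ⟪f' (Z t), Z'⟫ - τ' t * bregmanDiv f f' x (Z t)) I t := by
  have hfZ := hasDerivWithinAt_comp_of_hasGradientWithinAt hf' hZ hZs
  have hD := hasDerivWithinAt_bregmanDiv hg' hZ hZs hflow x
  refine ((hτ.mul (hfZ.sub_const (f x))).add hD).congr_deriv ?_
  rw [real_inner_smul_left, bregmanDiv]
  ring

lemma antitoneOn_qgfEnergy (hI : Convex ℝ I) (hf : ConvexOn ℝ s f) (hg : ConvexOn ℝ s g)
    (hZs : MapsTo Z I s)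
    (hf' : ∀ t ∈ I, HasGradientWithinAt f (f' (Z t)) s (Z t))
    (hg' : ∀ t ∈ I, HasGradientWithinAt g (g' (Z t)) s (Z t))
    (hτ : ∀ t ∈ I, HasDerivWithinAt τ (τ' t) I t)
    (hτ_nonneg : ∀ t ∈ interior I, 0 ≤ τ t) (hτ'_pos : ∀ t ∈ interior I, 0 < τ' t)
    (hZ : DifferentiableOn ℝ Z I)
    (hflow : ∀ t ∈ I, HasDerivWithinAt (fun r => g' (Z r)) (-(τ' t) • f' (Z t)) I t)
    (hx : x ∈ s) :
    AntitoneOn (qgfEnergy f g g' τ Z x) I := by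
  have hderiv (t : ℝ) (ht : t ∈ I) :=
    hasDerivWithinAt_qgfEnergy hZs (hf' t ht) (hg' t ht) (hτ t ht) (hZ t ht).hasDerivWithinAt
      (hflow t ht) x
  refine antitoneOn_of_hasDerivWithinAt_nonpos hI (fun t ht => (hderiv t ht).continuousWithinAt)
    (fun t ht => (hderiv t (interior_subset ht)).mono interior_subset) fun t ht => ?_
  have htI : t ∈ I := interior_subset ht
  have hcross : 0 ≤ ⟪-(τ' t) • f' (Z t), derivWithin Z I t⟫ :=
    inner_deriv_gradient_nonneg (uniqueDiffWithinAt_of_mem_nhds (mem_interior_iff_mem_nhds.1 ht))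
      htI hg hZs hg' (hZ t htI).hasDerivWithinAt (hflow t htI)
  have hdescent : ⟪f' (Z t), derivWithin Z I t⟫ ≤ 0 := by
    rw [real_inner_smul_left] at hcross
    exact nonpos_of_mul_nonneg_right hcross (neg_neg_of_pos (hτ'_pos t ht))
  have hD : 0 ≤ bregmanDiv f f' x (Z t) := bregmanDiv_nonneg hf (hf' t htI) (hZs htI) hx
  exact sub_nonpos_of_le <| (mul_nonpos_of_nonneg_of_nonpos (hτ_nonneg t ht) hdescent).trans
    (mul_nonneg (hτ'_pos t ht).le hD)

theorem qgf_convex_rate_general (hf : ConvexOn ℝ s f) (hg : ConvexOn ℝ s g)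
    (hZs : MapsTo Z (Ici 0) s)
    (hf' : ∀ t, 0 ≤ t → HasGradientWithinAt f (f' (Z t)) s (Z t))
    (hg' : ∀ t, 0 ≤ t → HasGradientWithinAt g (g' (Z t)) s (Z t))
    (hτ : ∀ t, 0 ≤ t → HasDerivWithinAt τ (τ' t) (Ici 0) t)
    (hτ0 : 0 ≤ τ 0) (hτ'_pos : ∀ t, 0 < t → 0 < τ' t)
    (hZ : DifferentiableOn ℝ Z (Ici 0))
    (hflow : ∀ t, 0 ≤ t →
      HasDerivWithinAt (fun u => g' (Z u)) (-(τ' t) • f' (Z t)) (Ici 0) t)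
    (hx : x ∈ s) (ht : 0 ≤ t) :
    τ t * (f (Z t) - f x) ≤ τ 0 * (f (Z 0) - f x) + bregmanDiv g g' x (Z 0) := by
  have hτ'_int : ∀ r ∈ interior (Ici (0 : ℝ)), 0 < τ' r := by simpa using hτ'_pos
  have hτ_mono : MonotoneOn τ (Ici 0) :=
    monotoneOn_of_hasDerivWithinAt_nonneg (convex_Ici 0) (fun r hr => (hτ r hr).continuousWithinAt)
      (fun r hr => (hτ r (interior_subset hr)).mono interior_subset)
      (fun r hr => (hτ'_int r hr).le)
  have hτ_nonneg : ∀ r ∈ interior (Ici (0 : ℝ)), 0 ≤ τ r := fun r hr =>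
    hτ0.trans (hτ_mono self_mem_Ici (interior_subset hr) (interior_subset hr))
  calc τ t * (f (Z t) - f x)
      ≤ qgfEnergy f g g' τ Z x t :=
        le_add_of_nonneg_right (bregmanDiv_nonneg hg (hg' t ht) (hZs ht) hx)
    _ ≤ qgfEnergy f g g' τ Z x 0 :=
        antitoneOn_qgfEnergy (convex_Ici 0) hf hg hZs hf' hg' hτ hτ_nonneg hτ'_int hZ hflow hx
          self_mem_Ici ht ht

end QuasiGradientFlow

/-- `O(1/τ(t))` convergence of the quasi-gradient flow
`(d/dt)∇g(Z) = −τ'(t)∇f(Z)` for convex objectives. -/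
theorem qgf_convex_rate {n : ℕ}
    (f g : EuclideanSpace ℝ (Fin n) → ℝ)
    (f' g' : EuclideanSpace ℝ (Fin n) → EuclideanSpace ℝ (Fin n))
    (hf' : ∀ x, HasGradientAt f (f' x) x)
    (hg' : ∀ x, HasGradientAt g (g' x) x)
    (hfconv : ConvexOn ℝ univ f)
    (hgconv : ConvexOn ℝ univ g)
    (hf0 : f 0 = 0)
    (hfnn : ∀ x, 0 ≤ f x)
    (τ τ' : ℝ → ℝ)
    (hτ0 : τ 0 = 0)
    (hτnn : ∀ t, 0 ≤ t → 0 ≤ τ t)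
    (hτ : ∀ t, 0 ≤ t → HasDerivAt τ (τ' t) t)
    (hτ'cont : ContinuousOn τ' (Ici 0))
    (hτ'pos : ∀ t, 0 ≤ t → 0 < τ' t)
    (hτinf : Filter.Tendsto τ Filter.atTop Filter.atTop)
    (Z Z' : ℝ → EuclideanSpace ℝ (Fin n))
    (hZ : ∀ t, 0 ≤ t → HasDerivAt Z (Z' t) t)
    (hODE : ∀ t, 0 ≤ t →
      HasDerivAt (fun u => g' (Z u)) (-(τ' t) • f' (Z t)) t) :
    ∀ t, 0 ≤ t → (τ t + 1) * f (Z t) ≤ breg g g' 0 (Z 0) + f (Z 0) := by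
  intro t ht
  simpa [hf0, hτ0, breg, bregmanDiv, add_comm] using
    qgf_convex_rate_general (τ := fun u => τ u + 1) (x := 0) hfconv hgconv (mapsTo_univ Z _)
      (fun u _ => hasGradientWithinAt_univ.2 (hf' (Z u)))
      (fun u _ => hasGradientWithinAt_univ.2 (hg' (Z u)))
      (fun u hu => ((hτ u hu).add_const 1).hasDerivWithinAt) (by simp [hτ0])
      (fun u hu => hτ'pos u hu.le)
      (fun u hu => (hZ u hu).differentiableAt.differentiableWithinAt)
      (fun u hu => (hODE u hu).hasDerivWithinAt) (mem_univ 0) ht
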